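/- Let w be a weight on (0,∞) and 1 < r < ∞, and suppose w ∈ B_r (i.e., there is c > 0 with t^r ∫_t^∞ s^{-r} w(s) ds ≤ c ∫₀^t w(s) ds for all t > 0). Then for every non-increasing non-negative function f on (0,∞): (∫₀^∞ ((1/t)∫₀^t f(s) ds)^r w(t) dt)^{1/r} ≲ (∫₀^∞ f(t)^r w(t) dt)^{1/r}, i.e., the Hardy averaging operator P is bounded on the cone of non-increasing functions in L_r(w). -/

import Mathlib

open Set MeasureTheory ENNReal

/-- The `B_r` condition on a weight `w`:
`t^r ∫_t^∞ s^{-r} w(s) ds ≤ c ∫₀^t w(s) ds` for all `t > 0`. -/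
def IsBr (w : ℝ → ℝ) (r : ℝ) : Prop :=
  ∃ c : ℝ, 0 < c ∧ ∀ t : ℝ, 0 < t →
    ENNReal.ofReal (t ^ r) * (∫⁻ s in Ioi t, ENNReal.ofReal (s ^ (-r) * w s)) ≤
      ENNReal.ofReal c * ∫⁻ s in Ioo (0 : ℝ) t, ENNReal.ofReal (w s)

/-!
Cutting `(0, t)` at the points `t / 2ᵏ` gives `Pf(t) ≤ ∑ₖ 2⁻ᵏ f(t / 2ᵏ)`, `k ≥ 1`, for
non-increasing `f`, so it suffices to control the dilates `t ↦ f(t / 2ᵏ)`. The level sets of `f` are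
initial segments of `(0, ∞)`, whence by the layer cake formula it is enough to bound
`μ (0, 2ᵏ t]` by a multiple of `ρᵏ μ (0, t]`, where `dμ = w dt`.

The `B_r` condition makes such a bound hold with some `ρ < 2ʳ`. Indeed, let `V(t)` denote the
weighted tail `tʳ ∫ₜ^∞ s⁻ʳ dμ(s)` and put `Φ(t) = μ (0, t] + V(t) = ∫₀^∞ min(1, (t / s)ʳ) dμ(s)`.
Then `Φ(2t) ≤ μ (0, t] + 2ʳ V(t)`, and as `V(t) ≤ c μ (0, t]`, the factor `2ʳ` falls on a fixed
fraction of `Φ(t)` only.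

To sum the dilates, split `1/2 = p q` with `p < 1` and `ρ qʳ < 1`: the elementary inequality
`(∑ₖ pᵏ xₖ)ʳ ≤ (∑ₖ pᵏ)ʳ ∑ₖ xₖʳ`, with `xₖ = qᵏ f(t / 2ᵏ)`, replaces Minkowski's inequality and works
for every `r > 0`.
-/

open scoped NNReal

section StochasticDomination

variable {α : Type*} [MeasurableSpace α] {μ ν : Measure α}

lemma lintegral_le_lintegral_of_isLowerSet [Preorder α]
    (h : ∀ s, IsLowerSet s → μ s ≤ ν s) {f : α → ℝ≥0∞} (hf : Antitone f) (hfm : Measurable f) :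
    ∫⁻ x, f x ∂μ ≤ ∫⁻ x, f x ∂ν := by
  -- The layer cake formula needs finite values, hence the truncations `min (f x) n`.
  have truncated (n : ℕ) : ∫⁻ x, min (f x) n ∂μ ≤ ∫⁻ x, min (f x) n ∂ν := by
    have min_ne_top (x : α) : min (f x) n ≠ ∞ := ne_top_of_le_ne_top (natCast_ne_top n) inf_le_right
    have layercake (κ : Measure α) :
        ∫⁻ x, min (f x) n ∂κ = ∫⁻ a in Ioi 0, κ {x | a < (min (f x) n).toReal} := by
      rw [← lintegral_eq_lintegral_meas_lt κ (.of_forall fun _ ↦ toReal_nonneg)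
        (hfm.min measurable_const).ennreal_toReal.aemeasurable]
      simp only [ofReal_toReal (min_ne_top _)]
    rw [layercake μ, layercake ν]
    exact lintegral_mono fun a ↦ h _ fun x y hyx (hx : a < _) ↦
      hx.trans_le (toReal_mono (min_ne_top y) (min_le_min_right _ (hf hyx)))
  have iSup_truncated (κ : Measure α) : ∫⁻ x, f x ∂κ = ⨆ n : ℕ, ∫⁻ x, min (f x) n ∂κ := by
    rw [← lintegral_iSup (fun n ↦ hfm.min measurable_const)
      fun m n hmn x ↦ min_le_min_left _ (Nat.cast_le.2 hmn)]
    simp only [← inf_iSup_eq, iSup_natCast, inf_top_eq]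
  rw [iSup_truncated μ, iSup_truncated ν]
  exact iSup_mono truncated

lemma measure_le_of_isLowerSet [LinearOrder α] [TopologicalSpace α] [OrderClosedTopology α]
    [TopologicalSpace.SeparableSpace α] (h : ∀ a, μ (Iic a) ≤ ν (Iic a)) {s : Set α}
    (hs : IsLowerSet s) : μ s ≤ ν s := by
  by_cases hmax : ∃ a, IsGreatest s a
  · obtain ⟨a, ha⟩ := hmax
    rw [subset_antisymm ha.2 (hs.Iic_subset ha.1)]
    exact h a
  · have exists_gt (x) (hx : x ∈ s) : ∃ y ∈ s, x < y := by
      by_contra! hle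
      exact hmax ⟨x, hx, hle⟩
    obtain ⟨D, hD, hDense⟩ := TopologicalSpace.exists_countable_dense α
    have : Countable ↥(D ∩ s) := (hD.mono inter_subset_left).to_subtype
    have eq_iUnion : s = ⋃ d : ↥(D ∩ s), Iic d.1 := by
      refine subset_antisymm (fun x hx ↦ ?_) (iUnion_subset fun d ↦ hs.Iic_subset d.2.2)
      obtain ⟨y, hy, hxy⟩ := exists_gt x hx
      obtain ⟨z, hz, hyz⟩ := exists_gt y hy
      obtain ⟨d, hdD, hd⟩ := hDense.exists_mem_open isOpen_Ioo ⟨y, hxy, hyz⟩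
      exact mem_iUnion.2 ⟨⟨d, hdD, hs hd.2.le hz⟩, hd.1.le⟩
    have directed : Directed (· ⊆ ·) fun d : ↥(D ∩ s) ↦ Iic d.1 :=
      Monotone.directed_le fun _ _ hde ↦ Iic_subset_Iic.2 hde
    rw [eq_iUnion, directed.measure_iUnion, directed.measure_iUnion]
    exact iSup_mono fun d ↦ h d

end StochasticDomination

lemma lintegral_comp_div_le_of_antitone {ν : Measure ℝ} {K : ℝ≥0∞} {l : ℝ} (hl : 0 < l)
    (h : ∀ t, ν (Iic (l * t)) ≤ K * ν (Iic t)) {f : ℝ → ℝ≥0∞} (hf : Antitone f) :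
    ∫⁻ t, f (t / l) ∂ν ≤ K * ∫⁻ t, f t ∂ν := by
  have map_Iic_le (t : ℝ) : ν.map (· / l) (Iic t) ≤ (K • ν) (Iic t) := by
    rw [Measure.map_apply (by fun_prop) measurableSet_Iic]
    have preimage_Iic : (· / l) ⁻¹' Iic t = Iic (l * t) := by
      ext x
      exact div_le_iff₀' hl
    rw [preimage_Iic]
    exact h t
  calc ∫⁻ t, f (t / l) ∂ν
      = ∫⁻ t, f t ∂ν.map (· / l) :=
        (lintegral_map hf.measurable (by fun_prop)).symm
    _ ≤ ∫⁻ t, f t ∂(K • ν) :=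
        lintegral_le_lintegral_of_isLowerSet (fun _ ↦ measure_le_of_isLowerSet map_Iic_le) hf
          hf.measurable
    _ = K * ∫⁻ t, f t ∂ν := lintegral_smul_measure K f

lemma tsum_mul_rpow_le {ι : Type*} {r : ℝ} (hr : 0 < r) (a x : ι → ℝ≥0∞) :
    (∑' i, a i * x i) ^ r ≤ (∑' i, a i) ^ r * ∑' i, x i ^ r := by
  have le_lr_norm (i : ι) : x i ≤ (∑' j, x j ^ r) ^ r⁻¹ :=
    (le_rpow_inv_iff hr).2 (ENNReal.le_tsum i)
  calc (∑' i, a i * x i) ^ r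
      ≤ ((∑' i, a i) * (∑' j, x j ^ r) ^ r⁻¹) ^ r := by
        rw [← ENNReal.tsum_mul_right]
        gcongr with i
        exact le_lr_norm i
    _ = (∑' i, a i) ^ r * ∑' i, x i ^ r := by
        rw [mul_rpow_of_nonneg _ _ hr.le, rpow_inv_rpow hr.ne']

/-- The Hardy averaging operator `(Pf)(t) = (1/t) ∫₀ᵗ f(s) ds`, for `t > 0`. -/
noncomputable def hardyAverage (f : ℝ → ℝ≥0∞) (t : ℝ) : ℝ≥0∞ :=
  (∫⁻ s in Ioo 0 t, f s) / ENNReal.ofReal t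

lemma Ioo_subset_iUnion_dyadic (t : ℝ) :
    Ioo 0 t ⊆ ⋃ k : ℕ, Ioc (t / 2 ^ (k + 1)) (t / 2 ^ k) := by
  rintro s ⟨hs, hst⟩
  obtain ⟨k, hk, hk'⟩ := exists_nat_pow_near ((one_le_div hs).2 hst.le) one_lt_two
  refine mem_iUnion.2 ⟨k, ?_, ?_⟩
  · exact (div_lt_comm₀ hs (by positivity)).1 hk'
  · exact (le_div_comm₀ (by positivity) hs).1 hk

lemma volume_Ioc_dyadic (t : ℝ) (k : ℕ) :
    volume (Ioc (t / 2 ^ (k + 1)) (t / 2 ^ k)) = 2⁻¹ ^ (k + 1) * ENNReal.ofReal t := by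
  have length_eq : t / 2 ^ k - t / 2 ^ (k + 1) = 2⁻¹ ^ (k + 1) * t := by
    rw [pow_succ, pow_succ, inv_pow]
    ring
  rw [Real.volume_Ioc, length_eq, ofReal_mul (by positivity), ofReal_pow (by positivity),
    ofReal_inv_of_pos two_pos, ofReal_ofNat]

lemma hardyAverage_le_tsum_dyadic {f : ℝ → ℝ≥0∞} (hf : AntitoneOn f (Ioi 0)) {t : ℝ}
    (ht : 0 < t) :
    hardyAverage f t ≤ ∑' k : ℕ, 2⁻¹ ^ (k + 1) * f (t / 2 ^ (k + 1)) := by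
  have le_dyadic (k : ℕ) : ∫⁻ s in Ioc (t / 2 ^ (k + 1)) (t / 2 ^ k), f s ≤
      f (t / 2 ^ (k + 1)) * volume (Ioc (t / 2 ^ (k + 1)) (t / 2 ^ k)) := by
    rw [← setLIntegral_const]
    have left_pos : 0 < t / 2 ^ (k + 1) := by positivity
    exact setLIntegral_mono' measurableSet_Ioc fun s hs ↦
      hf left_pos (left_pos.trans hs.1) hs.1.le
  rw [hardyAverage, ENNReal.div_le_iff_le_mul (by simp [ht]) (by simp), ← ENNReal.tsum_mul_right]
  calc ∫⁻ s in Ioo 0 t, f s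
      ≤ ∫⁻ s in ⋃ k : ℕ, Ioc (t / 2 ^ (k + 1)) (t / 2 ^ k), f s :=
        lintegral_mono_set (Ioo_subset_iUnion_dyadic t)
    _ ≤ ∑' k : ℕ, ∫⁻ s in Ioc (t / 2 ^ (k + 1)) (t / 2 ^ k), f s := lintegral_iUnion_le _ _
    _ ≤ ∑' k : ℕ, 2⁻¹ ^ (k + 1) * f (t / 2 ^ (k + 1)) * ENNReal.ofReal t := by
        gcongr with k
        exact (le_dyadic k).trans_eq (by rw [volume_Ioc_dyadic]; ring)

/-- The weighted tail `t ^ r * ∫_t^∞ s ^ (-r) dμ(s)`, the left-hand side of the `B_r` condition. -/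
noncomputable def weightedTail (μ : Measure ℝ) (r t : ℝ) : ℝ≥0∞ :=
  ENNReal.ofReal t ^ r * ∫⁻ s in Ioi t, ENNReal.ofReal s ^ (-r) ∂μ

/-- The `B_r` condition with constant `c` for a measure on `(0, ∞)` in place of a weight. Because
of possible atoms the right-hand side is the mass of the half-closed interval `(0, t]`. -/
def IsBrMeasure (μ : Measure ℝ) (r : ℝ) (c : ℝ≥0) : Prop :=
  ∀ t, 0 < t → weightedTail μ r t ≤ c * μ (Ioc 0 t)

/-- The factor by which `μ (0, t] + weightedTail μ r t` grows at most when `t` is doubled, for a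
measure `μ` satisfying the `B_r` condition with constant `c`. -/
noncomputable def brGrowth (r : ℝ) (c : ℝ≥0) : ℝ≥0 := (1 + 2 ^ r * c) / (1 + c)

section Growth

variable {μ : Measure ℝ} {r : ℝ} {c : ℝ≥0}

lemma brGrowth_lt (hr : 0 < r) (c : ℝ≥0) : brGrowth r c < 2 ^ r := by
  rw [brGrowth, div_lt_iff₀ (by positivity), mul_one_add]
  gcongr
  exact NNReal.one_lt_rpow one_lt_two hr

lemma add_two_rpow_mul_le_brGrowth_mul (hr : 0 < r) {a b : ℝ≥0∞} (hba : b ≤ c * a) :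
    a + 2 ^ r * b ≤ brGrowth r c * (a + b) := by
  obtain ⟨d, hd⟩ := exists_add_of_le (one_le_rpow (x := 2) one_le_two hr)
  have coe_brGrowth : (brGrowth r c : ℝ≥0∞) = (1 + 2 ^ r * c) / (1 + c) := by
    rw [brGrowth, coe_div (by positivity)]
    push_cast [coe_rpow_of_nonneg _ hr.le]
    rfl
  rw [coe_brGrowth, ← ENNReal.mul_div_right_comm,
    ENNReal.le_div_iff_mul_le (.inl (by simp)) (.inl (by simp)), hd]
  calc (a + (1 + d) * b) * (1 + c)
      = (a + b) * (1 + c) + d * c * b + d * b := by ring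
    _ ≤ (a + b) * (1 + c) + d * c * b + d * (c * a) := by gcongr
    _ = (1 + (1 + d) * c) * (a + b) := by ring

lemma measure_Ioc_le_rpow_mul_setLIntegral (hr : 0 ≤ r) {s t : ℝ} (hs : 0 ≤ s) :
    μ (Ioc s t) ≤ ENNReal.ofReal t ^ r * ∫⁻ x in Ioc s t, ENNReal.ofReal x ^ (-r) ∂μ := by
  rw [← lintegral_const_mul _ (by fun_prop), ← setLIntegral_one]
  refine setLIntegral_mono' measurableSet_Ioc fun x ⟨hsx, hxt⟩ ↦ ?_
  have hx : 0 < ENNReal.ofReal x := ofReal_pos.2 (hs.trans_lt hsx)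
  rw [rpow_neg, ← div_eq_mul_inv, ENNReal.le_div_iff_mul_le (.inl (by simp [hx.ne']))
    (.inl (rpow_ne_top_of_nonneg hr ofReal_ne_top)), one_mul]
  gcongr

lemma measure_Ioc_two_mul_add_weightedTail_le (hr : 0 ≤ r) {t : ℝ} (ht : 0 < t) :
    μ (Ioc 0 (2 * t)) + weightedTail μ r (2 * t) ≤
      μ (Ioc 0 t) + 2 ^ r * weightedTail μ r t := by
  have ht2 : t ≤ 2 * t := by linarith
  calc μ (Ioc 0 (2 * t)) + weightedTail μ r (2 * t)
      ≤ μ (Ioc 0 t) + μ (Ioc t (2 * t)) + weightedTail μ r (2 * t) := by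
        gcongr
        rw [← Ioc_union_Ioc_eq_Ioc ht.le ht2]
        exact measure_union_le _ _
    _ ≤ μ (Ioc 0 t) + ENNReal.ofReal (2 * t) ^ r *
          ∫⁻ s in Ioc t (2 * t), ENNReal.ofReal s ^ (-r) ∂μ + weightedTail μ r (2 * t) := by
        gcongr
        exact measure_Ioc_le_rpow_mul_setLIntegral hr ht.le
    _ = μ (Ioc 0 t) + 2 ^ r * weightedTail μ r t := by
        rw [weightedTail, weightedTail, add_assoc, ← mul_add,
          ← lintegral_union measurableSet_Ioi (Ioc_disjoint_Ioi le_rfl), Ioc_union_Ioi_eq_Ioi ht2,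
          ofReal_mul two_pos.le, ofReal_ofNat, mul_rpow_of_nonneg _ _ hr, mul_assoc]

lemma IsBrMeasure.measure_Ioc_two_pow_mul_le (h : IsBrMeasure μ r c) (hr : 0 < r) (k : ℕ) {t : ℝ}
    (ht : 0 < t) : μ (Ioc 0 (2 ^ k * t)) ≤ (1 + c) * brGrowth r c ^ k * μ (Ioc 0 t) := by
  set Φ : ℝ → ℝ≥0∞ := fun t ↦ μ (Ioc 0 t) + weightedTail μ r t
  have doubling {t : ℝ} (ht : 0 < t) : Φ (2 * t) ≤ brGrowth r c * Φ t :=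
    (measure_Ioc_two_mul_add_weightedTail_le hr.le ht).trans
      (add_two_rpow_mul_le_brGrowth_mul hr (h t ht))
  have iterated : Φ (2 ^ k * t) ≤ brGrowth r c ^ k * Φ t := by
    induction k with
    | zero => simp
    | succ k ih =>
      calc Φ (2 ^ (k + 1) * t) = Φ (2 * (2 ^ k * t)) := by rw [pow_succ', mul_assoc]
        _ ≤ brGrowth r c * Φ (2 ^ k * t) := doubling (by positivity)
        _ ≤ brGrowth r c * (brGrowth r c ^ k * Φ t) := by gcongr
        _ = brGrowth r c ^ (k + 1) * Φ t := by rw [pow_succ', mul_assoc]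
  calc μ (Ioc 0 (2 ^ k * t)) ≤ Φ (2 ^ k * t) := le_self_add
    _ ≤ brGrowth r c ^ k * Φ t := iterated
    _ ≤ brGrowth r c ^ k * (μ (Ioc 0 t) + c * μ (Ioc 0 t)) := by
        gcongr
        exact add_le_add_right (h t ht) _
    _ = (1 + c) * brGrowth r c ^ k * μ (Ioc 0 t) := by ring

lemma IsBrMeasure.setLIntegral_comp_div_two_pow_le (h : IsBrMeasure μ r c) (hr : 0 < r) (k : ℕ)
    {f : ℝ → ℝ≥0∞} (hf : Antitone f) :
    ∫⁻ t in Ioi 0, f (t / 2 ^ k) ∂μ ≤ (1 + c) * brGrowth r c ^ k * ∫⁻ t in Ioi 0, f t ∂μ := by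
  refine lintegral_comp_div_le_of_antitone (by positivity) (fun t ↦ ?_) hf
  simp only [Measure.restrict_apply measurableSet_Iic, inter_comm (Iic _), Ioi_inter_Iic]
  obtain ht | ht := le_or_gt t 0
  · simp [Ioc_eq_empty_of_le (mul_nonpos_of_nonneg_of_nonpos (pow_nonneg two_pos.le k) ht)]
  · exact h.measure_Ioc_two_pow_mul_le hr k ht

end Growth

section Hardy

variable {μ : Measure ℝ} {r : ℝ} {c : ℝ≥0}

lemma hardyAverage_rpow_le_tsum_dyadic (hr : 0 < r) {p q : ℝ≥0∞} (hpq : p * q = 2⁻¹)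
    {f : ℝ → ℝ≥0∞} (hf : AntitoneOn f (Ioi 0)) {t : ℝ} (ht : 0 < t) :
    hardyAverage f t ^ r ≤
      (∑' k : ℕ, p ^ (k + 1)) ^ r * ∑' k : ℕ, (q ^ r) ^ (k + 1) * f (t / 2 ^ (k + 1)) ^ r := by
  have rpow_term (k : ℕ) :
      (q ^ (k + 1) * f (t / 2 ^ (k + 1))) ^ r = (q ^ r) ^ (k + 1) * f (t / 2 ^ (k + 1)) ^ r := by
    rw [mul_rpow_of_nonneg _ _ hr.le, ← rpow_natCast, ← rpow_natCast, ← rpow_mul, ← rpow_mul,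
      mul_comm r]
  calc hardyAverage f t ^ r
      ≤ (∑' k : ℕ, p ^ (k + 1) * (q ^ (k + 1) * f (t / 2 ^ (k + 1)))) ^ r := by
        gcongr
        simpa only [← mul_assoc, ← mul_pow, hpq] using hardyAverage_le_tsum_dyadic hf ht
    _ ≤ (∑' k : ℕ, p ^ (k + 1)) ^ r * ∑' k : ℕ, (q ^ (k + 1) * f (t / 2 ^ (k + 1))) ^ r :=
        tsum_mul_rpow_le hr _ _
    _ = _ := by simp only [rpow_term]

lemma IsBrMeasure.setLIntegral_hardyAverage_rpow_le (h : IsBrMeasure μ r c) (hr : 0 < r)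
    {p q : ℝ≥0∞} (hpq : p * q = 2⁻¹) {f : ℝ → ℝ≥0∞} (hf : Antitone f) :
    ∫⁻ t in Ioi 0, hardyAverage f t ^ r ∂μ ≤
      (∑' k : ℕ, p ^ (k + 1)) ^ r * ((1 + c) * ∑' k : ℕ, (brGrowth r c * q ^ r) ^ (k + 1)) *
        ∫⁻ t in Ioi 0, f t ^ r ∂μ := by
  have hfr : Antitone fun t ↦ f t ^ r := (monotone_rpow_of_nonneg hr.le).comp_antitone hf
  have measurable_dilate (k : ℕ) : Measurable fun t ↦ f (t / 2 ^ (k + 1)) ^ r :=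
    hfr.measurable.comp (measurable_id.div_const _)
  calc ∫⁻ t in Ioi 0, hardyAverage f t ^ r ∂μ
      ≤ ∫⁻ t in Ioi 0, (∑' k : ℕ, p ^ (k + 1)) ^ r *
          ∑' k : ℕ, (q ^ r) ^ (k + 1) * f (t / 2 ^ (k + 1)) ^ r ∂μ :=
        setLIntegral_mono' measurableSet_Ioi fun t ht ↦
          hardyAverage_rpow_le_tsum_dyadic hr hpq (hf.antitoneOn _) ht
    _ = (∑' k : ℕ, p ^ (k + 1)) ^ r *
          ∑' k : ℕ, (q ^ r) ^ (k + 1) * ∫⁻ t in Ioi 0, f (t / 2 ^ (k + 1)) ^ r ∂μ := by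
        rw [lintegral_const_mul _ (.tsum fun k ↦ (measurable_dilate k).const_mul _),
          lintegral_tsum fun k ↦ ((measurable_dilate k).const_mul _).aemeasurable]
        simp only [lintegral_const_mul _ (measurable_dilate _)]
    _ ≤ (∑' k : ℕ, p ^ (k + 1)) ^ r * ∑' k : ℕ, (q ^ r) ^ (k + 1) *
          ((1 + c) * brGrowth r c ^ (k + 1) * ∫⁻ t in Ioi 0, f t ^ r ∂μ) := by
        gcongr with k
        exact h.setLIntegral_comp_div_two_pow_le hr (k + 1) hfr
    _ = _ := by
        simp only [mul_assoc, mul_left_comm (_ ^ (_ + 1)) (1 + (c : ℝ≥0∞)), mul_pow,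
          ← ENNReal.tsum_mul_right, ← ENNReal.tsum_mul_left]
        simp only [mul_left_comm]

lemma tsum_geometric_add_one_ne_top {q : ℝ≥0∞} (hq : q < 1) : ∑' k : ℕ, q ^ (k + 1) ≠ ∞ := by
  rw [ENNReal.tsum_geometric_add_one]
  exact mul_ne_top hq.ne_top (inv_ne_top.2 (tsub_pos_of_lt hq).ne')

lemma exists_mul_eq_inv_two_of_brGrowth (hr : 0 < r) (c : ℝ≥0) :
    ∃ p q : ℝ≥0∞, p * q = 2⁻¹ ∧ p < 1 ∧ brGrowth r c * q ^ r < 1 := by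
  obtain ⟨σ, hσ, hσ2⟩ := exists_between ((NNReal.rpow_inv_lt_iff hr).2 (brGrowth_lt hr c))
  have σ_pos : 0 < σ := bot_le.trans_lt hσ
  rw [NNReal.rpow_inv_lt_iff hr] at hσ
  refine ⟨↑(σ / 2), ↑σ⁻¹, ?_, ?_, ?_⟩
  · rw [← coe_mul, ← coe_ofNat, ← coe_inv two_ne_zero]
    congr 1
    field_simp
  · exact_mod_cast (div_lt_one two_pos).2 hσ2
  · rw [← coe_rpow_of_nonneg _ hr.le, NNReal.inv_rpow, ← coe_mul, ← div_eq_mul_inv]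
    exact_mod_cast (div_lt_one (NNReal.rpow_pos σ_pos)).2 hσ

lemma exists_setLIntegral_hardyAverage_rpow_le (hr : 0 < r) (c : ℝ≥0) :
    ∃ C : ℝ≥0, ∀ μ : Measure ℝ, IsBrMeasure μ r c → ∀ f : ℝ → ℝ≥0∞, AntitoneOn f (Ioi 0) →
      ∫⁻ t in Ioi 0, hardyAverage f t ^ r ∂μ ≤ C * ∫⁻ t in Ioi 0, f t ^ r ∂μ := by
  obtain ⟨p, q, hpq, hp, hq⟩ := exists_mul_eq_inv_two_of_brGrowth hr c
  lift (∑' k : ℕ, p ^ (k + 1)) ^ r * ((1 + c) * ∑' k : ℕ, (brGrowth r c * q ^ r) ^ (k + 1))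
    to ℝ≥0 using mul_ne_top (rpow_ne_top_of_nonneg hr.le (tsum_geometric_add_one_ne_top hp))
      (mul_ne_top (by simp) (tsum_geometric_add_one_ne_top hq)) with C hC
  refine ⟨C, fun μ hμ f hf ↦ ?_⟩
  obtain ⟨g, hg, hfg⟩ := hf.exists_antitone_extension (OrderBot.bddBelow _) (OrderTop.bddAbove _)
  have average_eq (t : ℝ) : hardyAverage f t = hardyAverage g t := by
    rw [hardyAverage, setLIntegral_congr_fun measurableSet_Ioo (hfg.mono Ioo_subset_Ioi_self),
      hardyAverage]
  have norm_eq : ∫⁻ t in Ioi 0, f t ^ r ∂μ = ∫⁻ t in Ioi 0, g t ^ r ∂μ :=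
    setLIntegral_congr_fun measurableSet_Ioi fun t ht ↦ congrArg (· ^ r) (hfg ht)
  simp only [average_eq, norm_eq, hC]
  exact hμ.setLIntegral_hardyAverage_rpow_le hr hpq hg

end Hardy

theorem hardy_on_decreasing_general {r : ℝ} (hr : 0 < r) (c : ℝ≥0) :
    ∃ C : ℝ, 0 < C ∧ ∀ μ : Measure ℝ, IsBrMeasure μ r c →
      ∀ f : ℝ → ℝ≥0∞, AntitoneOn f (Ioi 0) →
        (∫⁻ t in Ioi 0, hardyAverage f t ^ r ∂μ) ^ (1 / r) ≤
          ENNReal.ofReal C * (∫⁻ t in Ioi 0, f t ^ r ∂μ) ^ (1 / r) := by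
  obtain ⟨C, hC⟩ := exists_setLIntegral_hardyAverage_rpow_le hr c
  refine ⟨(C + 1) ^ (1 / r), by positivity, fun μ hμ f hf ↦ ?_⟩
  rw [← ofReal_rpow_of_pos (by positivity), ← mul_rpow_of_nonneg _ _ (by positivity)]
  gcongr
  refine (hC μ hμ f hf).trans ?_
  gcongr
  rw [← ofReal_coe_nnreal]
  exact ofReal_le_ofReal (by simp)

section Weight

variable {w : ℝ → ℝ}

lemma setLIntegral_withDensity_ofReal (hwm : Measurable w) (g : ℝ → ℝ≥0∞) {s : Set ℝ}
    (hs : MeasurableSet s) :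
    ∫⁻ t in s, g t ∂volume.withDensity (fun t ↦ ENNReal.ofReal (w t)) =
      ∫⁻ t in s, g t * ENNReal.ofReal (w t) := by
  rw [setLIntegral_withDensity_eq_setLIntegral_mul_non_measurable _ hwm.ennreal_ofReal _ hs
    (.of_forall fun _ ↦ ofReal_lt_top)]
  simp only [Pi.mul_apply, mul_comm]

lemma weightedTail_withDensity (hwm : Measurable w) (r : ℝ) {t : ℝ} (ht : 0 < t) :
    weightedTail (volume.withDensity fun s ↦ ENNReal.ofReal (w s)) r t =
      ENNReal.ofReal (t ^ r) * ∫⁻ s in Ioi t, ENNReal.ofReal (s ^ (-r) * w s) := by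
  rw [weightedTail, ofReal_rpow_of_pos ht, setLIntegral_withDensity_ofReal hwm _ measurableSet_Ioi]
  congr 1
  refine setLIntegral_congr_fun measurableSet_Ioi fun s hs ↦ ?_
  have hs : 0 < s := ht.trans hs
  rw [ofReal_rpow_of_pos hs, ofReal_mul (by positivity)]

lemma IsBr.exists_isBrMeasure {r : ℝ} (h : IsBr w r) (hwm : Measurable w) :
    ∃ c : ℝ≥0, IsBrMeasure (volume.withDensity fun s ↦ ENNReal.ofReal (w s)) r c := by
  obtain ⟨c, -, hc⟩ := h
  refine ⟨c.toNNReal, fun t ht ↦ ?_⟩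
  rw [weightedTail_withDensity hwm r ht, withDensity_apply _ measurableSet_Ioc,
    ← setLIntegral_congr Ioo_ae_eq_Ioc]
  exact hc t ht

end Weight

/-- If `1 < r < ∞` and `w ∈ B_r`, then the Hardy averaging
operator `(Pf)(t) = (1/t)∫₀^t f(s) ds` is bounded on the cone of non-negative
non-increasing functions in `L_r(w)`:
`(∫₀^∞ ((1/t)∫₀^t f)^r w(t) dt)^{1/r} ≲ (∫₀^∞ f(t)^r w(t) dt)^{1/r}`,
with a constant depending only on `r` and the `B_r` constant of `w`. -/
theorem hardy_on_decreasing (r : ℝ) (hr : 1 < r)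
    (w : ℝ → ℝ) (hw : ∀ t, 0 ≤ w t) (hwm : Measurable w) (hBr : IsBr w r) :
    ∃ C : ℝ, 0 < C ∧ ∀ f : ℝ → ℝ, (∀ x, 0 ≤ f x) → AntitoneOn f (Ioi 0) →
      (∫⁻ t in Ioi (0 : ℝ),
          ((∫⁻ s in Ioo (0 : ℝ) t, ENNReal.ofReal (f s)) / ENNReal.ofReal t) ^ r *
            ENNReal.ofReal (w t)) ^ (1 / r) ≤
        ENNReal.ofReal C *
          (∫⁻ t in Ioi (0 : ℝ),
            ENNReal.ofReal (f t) ^ r * ENNReal.ofReal (w t)) ^ (1 / r) := by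
  obtain ⟨c, hμ⟩ := hBr.exists_isBrMeasure hwm
  obtain ⟨C, hC, hardy⟩ := hardy_on_decreasing_general (zero_lt_one.trans hr) c
  exact ⟨C, hC, fun f _ hf ↦ by
    simpa only [setLIntegral_withDensity_ofReal hwm _ measurableSet_Ioi, hardyAverage,
      Function.comp_apply] using hardy _ hμ _ (ofReal_mono.comp_antitoneOn hf)⟩
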